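/- arXiv:2309.02890 — 2 statements merged into one kernel-verified Lean document; each statement's English description precedes it below -/
import Mathlib

section
/- For every integer k ≥ 1, the ideal generated by t₀^k + t₁^k + t₂^k in the Laurent polynomial ring ℂ[t₀^{±1}, t₁^{±1}, t₂^{±1}] (i.e. the group algebra AddMonoidAlgebra ℂ (Fin 3 →₀ ℤ), where t_j denotes the basis monomial corresponding to the j-th standard basis vector of ℤ^3) is a prime ideal. -/
/-!
Over a domain in which `k ≠ 0`, the form `∑ Xᵢ ^ k` in at least two variables is squarefree: if
`p ^ 2` divides it, then `p` divides every partial derivative `k Xᵢ ^ (k - 1)`, so `p` is a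
constant, and it is a unit because the form has a coefficient `1`. Over a factorial ring the form in
one more variable `T` is `T ^ k + a` with `a` squarefree and not a unit, hence prime by Eisenstein's
criterion at a prime factor of `a`. The Laurent polynomial ring is the localization of the
polynomial ring at the monomials, and no monomial is divisible by a form with at least two terms, so
the form stays prime there.
-/

section Eisenstein

open Polynomial

theorem irreducible_X_pow_add_C_of_squarefree {R : Type*} [CommRing R] [IsDomain R]
    [UniqueFactorizationMonoid R] {a : R} (ha : Squarefree a) (ha' : ¬IsUnit a) {n : ℕ}
    (hn : n ≠ 0) : Irreducible (X ^ n + C a : R[X]) := by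
  obtain ⟨p, hp, hpa⟩ := WfDvdMonoid.exists_irreducible_factor ha' ha.ne_zero
  have hprime : (Ideal.span {p}).IsPrime := (Ideal.span_singleton_prime hp.ne_zero).2 hp.prime
  have hmonic : (X ^ n + C a).Monic := monic_X_pow_add_C a hn
  have heis : (X ^ n + C a).IsEisensteinAt (Ideal.span {p}) := by
    refine ⟨?_, fun {i} hi => ?_, ?_⟩
    · rw [hmonic.leadingCoeff]
      exact hprime.one_notMem
    · rw [natDegree_X_pow_add_C] at hi
      rw [coeff_add, coeff_X_pow, if_neg hi.ne, zero_add, coeff_C]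
      split_ifs
      · exact Ideal.mem_span_singleton.2 hpa
      · exact Ideal.zero_mem _
    · rw [coeff_add, coeff_X_pow, if_neg hn.symm, zero_add, coeff_C_zero,
        Ideal.span_singleton_pow, Ideal.mem_span_singleton, sq]
      exact fun h => hp.not_isUnit (ha p h)
  refine heis.irreducible hprime hmonic.isPrimitive ?_
  rw [natDegree_X_pow_add_C]
  exact Nat.pos_of_ne_zero hn

end Eisenstein

theorem dvd_derivation_apply_of_mul_self_dvd {R A : Type*} [CommSemiring R] [CommSemiring A]
    [Algebra R A] (D : Derivation R A A) {p f : A} (h : p * p ∣ f) : p ∣ D f := by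
  obtain ⟨g, rfl⟩ := h
  rw [mul_assoc, D.leibniz, smul_eq_mul, smul_eq_mul, mul_assoc p g]
  exact dvd_add (dvd_mul_right p _) (dvd_mul_right p _)

open MvPolynomial in
theorem exists_eq_C_of_dvd_monomial_single {σ R : Type*} [CommRing R] [NoZeroDivisors R]
    {i j : σ} (hij : i ≠ j) {m n : ℕ} {a b : R} (ha : a ≠ 0) (hb : b ≠ 0) {p : MvPolynomial σ R}
    (hi : p ∣ monomial (Finsupp.single i m) a) (hj : p ∣ monomial (Finsupp.single j n) b) :
    ∃ c, p = C c := by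
  classical
  obtain ⟨d, c, hdi, -, rfl⟩ := (dvd_monomial_iff_exists ha).1 hi
  have hdj : d ≤ Finsupp.single j n := (monomial_dvd_monomial.1 hj).1.resolve_left hb
  have hd : d = 0 := by
    ext l
    have hli := hdi l
    have hlj := hdj l
    rw [Finsupp.single_apply] at hli hlj
    grind
  exact ⟨c, by rw [hd, C_apply]⟩

section SumXPow

open MvPolynomial

variable {σ R : Type*} [Fintype σ] {k : ℕ}

theorem coeff_single_sum_X_pow [CommSemiring R] (hk : k ≠ 0) (i : σ) :
    coeff (Finsupp.single i k) (∑ j, X j ^ k : MvPolynomial σ R) = 1 := by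
  classical
  simp [coeff_sum, coeff_X_pow, Finsupp.single_left_inj hk]

theorem pderiv_sum_X_pow [CommSemiring R] (i : σ) :
    pderiv i (∑ j, X j ^ k : MvPolynomial σ R) = monomial (Finsupp.single i (k - 1)) (k : R) := by
  classical
  rw [map_sum, Finset.sum_eq_single i (fun j _ hji => ?_) (by simp)]
  · rw [X_pow_eq_monomial, pderiv_monomial, ← Finsupp.single_tsub, Finsupp.single_eq_same, one_mul]
  · rw [X_pow_eq_monomial, pderiv_monomial, Finsupp.single_eq_of_ne hji.symm, Nat.cast_zero,
      mul_zero, monomial_zero]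

theorem not_isUnit_sum_X_pow [CommSemiring R] [Nontrivial R] (hk : k ≠ 0) :
    ¬IsUnit (∑ i, X i ^ k : MvPolynomial σ R) := by
  intro h
  simpa [hk] using h.map constantCoeff

variable [CommRing R] [IsDomain R]

theorem not_sum_X_pow_dvd_monomial [Nontrivial σ] (hk : k ≠ 0) (d : σ →₀ ℕ) :
    ¬(∑ i, X i ^ k : MvPolynomial σ R) ∣ monomial d 1 := by
  classical
  intro h
  obtain ⟨m, u, -, -, hmu⟩ := dvd_monomial_one_iff_exists.1 h
  have hm (i : σ) : m = Finsupp.single i k := by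
    by_contra hne
    simpa [hmu, coeff_monomial, hne] using coeff_single_sum_X_pow (R := R) hk i
  obtain ⟨i, j, hij⟩ := exists_pair_ne σ
  exact hij ((Finsupp.single_left_inj hk).1 ((hm i).symm.trans (hm j)))

theorem squarefree_sum_X_pow [Nontrivial σ] (hk : (k : R) ≠ 0) :
    Squarefree (∑ i, X i ^ k : MvPolynomial σ R) := by
  intro p hp
  have hk' : k ≠ 0 := by rintro rfl; exact hk Nat.cast_zero
  have hdvd (i : σ) : p ∣ monomial (Finsupp.single i (k - 1)) (k : R) := by
    rw [← pderiv_sum_X_pow]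
    exact dvd_derivation_apply_of_mul_self_dvd (pderiv i) hp
  obtain ⟨i, j, hij⟩ := exists_pair_ne σ
  obtain ⟨c, rfl⟩ := exists_eq_C_of_dvd_monomial_single hij hk hk (hdvd i) (hdvd j)
  have hc : c ∣ 1 := by
    rw [← coeff_single_sum_X_pow hk' i]
    exact (C_dvd_iff_dvd_coeff c _).1 (dvd_of_mul_left_dvd hp) _
  exact (isUnit_of_dvd_one hc).map C

theorem prime_sum_X_pow_fin [UniqueFactorizationMonoid R] (hk : (k : R) ≠ 0) {n : ℕ} (hn : 2 ≤ n) :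
    Prime (∑ i, X i ^ k : MvPolynomial (Fin (n + 1)) R) := by
  have : Nontrivial (Fin n) := Fin.nontrivial_iff_two_le.2 hn
  have hk' : k ≠ 0 := by rintro rfl; exact hk Nat.cast_zero
  rw [← MulEquiv.prime_iff (finSuccEquiv R n)]
  have h : finSuccEquiv R n (∑ i, X i ^ k) = Polynomial.X ^ k + Polynomial.C (∑ i, X i ^ k) := by
    simp [Fin.sum_univ_succ, finSuccEquiv_X_zero, finSuccEquiv_X_succ]
  rw [h]
  exact (irreducible_X_pow_add_C_of_squarefree (squarefree_sum_X_pow hk)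
    (not_isUnit_sum_X_pow hk') hk').prime

theorem prime_sum_X_pow [UniqueFactorizationMonoid R] (hσ : 3 ≤ Fintype.card σ)
    (hk : (k : R) ≠ 0) : Prime (∑ i, X i ^ k : MvPolynomial σ R) := by
  obtain ⟨n, hn⟩ := Nat.exists_eq_add_of_le' (Nat.one_le_of_lt hσ)
  have e := Fintype.equivFinOfCardEq hn
  rw [← MulEquiv.prime_iff (renameEquiv R e)]
  convert prime_sum_X_pow_fin hk (n := n) (by omega) using 1
  simp [Equiv.sum_comp e (fun i => (X i ^ k : MvPolynomial _ R))]

end SumXPow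

section Laurent

open MvPolynomial

variable (σ R : Type*) [CommSemiring R]

/-- The inclusion of the polynomial ring `R[Xᵢ]` into the Laurent polynomial ring `R[Xᵢ^{±1}]`,
the latter encoded as the group algebra of `σ →₀ ℤ`. -/
noncomputable def mvPolynomialToLaurent : MvPolynomial σ R →ₐ[R] AddMonoidAlgebra R (σ →₀ ℤ) :=
  AddMonoidAlgebra.mapDomainAlgHom R R (Finsupp.mapRange.addMonoidHom (Nat.castAddMonoidHom ℤ))

variable {σ R}

theorem mvPolynomialToLaurent_injective : Function.Injective (mvPolynomialToLaurent σ R) :=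
  AddMonoidAlgebra.mapDomain_injective
    (Finsupp.mapRange_injective _ (map_zero _) Nat.cast_injective)

theorem mvPolynomialToLaurent_monomial (d : σ →₀ ℕ) (c : R) :
    mvPolynomialToLaurent σ R (monomial d c) =
      AddMonoidAlgebra.single (d.mapRange Nat.cast Nat.cast_zero) c :=
  AddMonoidAlgebra.mapDomain_single

theorem mvPolynomialToLaurent_X (i : σ) :
    mvPolynomialToLaurent σ R (X i) = AddMonoidAlgebra.single (Finsupp.single i 1) 1 := by
  rw [X, mvPolynomialToLaurent_monomial, Finsupp.mapRange_single, Nat.cast_one]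

theorem isUnit_mvPolynomialToLaurent_monomial (d : σ →₀ ℕ) :
    IsUnit (mvPolynomialToLaurent σ R (monomial d 1)) := by
  rw [mvPolynomialToLaurent_monomial]
  refine IsUnit.of_mul_eq_one (AddMonoidAlgebra.single (-d.mapRange Nat.cast Nat.cast_zero) 1) ?_
  rw [AddMonoidAlgebra.single_mul_single, add_neg_cancel, one_mul, AddMonoidAlgebra.one_def]

theorem exists_mul_monomial_eq_mvPolynomialToLaurent (f : AddMonoidAlgebra R (σ →₀ ℤ)) :
    ∃ (d : σ →₀ ℕ) (p : MvPolynomial σ R),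
      f * mvPolynomialToLaurent σ R (monomial d 1) = mvPolynomialToLaurent σ R p := by
  induction f using AddMonoidAlgebra.induction_linear with
  | zero => exact ⟨0, 0, by rw [zero_mul, map_zero]⟩
  | add f g hf hg =>
    obtain ⟨d, p, hp⟩ := hf
    obtain ⟨e, q, hq⟩ := hg
    have hde : (monomial (d + e) 1 : MvPolynomial σ R) = monomial d 1 * monomial e 1 := by
      rw [monomial_mul, one_mul]
    refine ⟨d + e, p * monomial e 1 + q * monomial d 1, ?_⟩
    rw [hde, map_add, map_mul, map_mul, map_mul, ← hp, ← hq]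
    ring
  | single d c =>
    refine ⟨(-d).mapRange Int.toNat Int.toNat_zero,
      monomial (d.mapRange Int.toNat Int.toNat_zero) c, ?_⟩
    rw [mvPolynomialToLaurent_monomial, mvPolynomialToLaurent_monomial,
      AddMonoidAlgebra.single_mul_single, mul_one]
    congr 1
    ext i
    simp only [Finsupp.add_apply, Finsupp.mapRange_apply, Finsupp.neg_apply]
    omega

theorem isLocalization_mvPolynomialToLaurent :
    letI := (mvPolynomialToLaurent σ R).toAlgebra
    IsLocalization (MonoidHom.mrange (monomialOneHom R σ)) (AddMonoidAlgebra R (σ →₀ ℤ)) := by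
  let := (mvPolynomialToLaurent σ R).toAlgebra
  refine ⟨?_, ?_, ?_⟩
  · rintro ⟨_, d, rfl⟩
    exact isUnit_mvPolynomialToLaurent_monomial d.toAdd
  · intro f
    obtain ⟨d, p, h⟩ := exists_mul_monomial_eq_mvPolynomialToLaurent f
    exact ⟨⟨p, monomial d 1, .ofAdd d, rfl⟩, h⟩
  · intro p q h
    exact ⟨1, by rw [mvPolynomialToLaurent_injective h]⟩

end Laurent

open MvPolynomial in
theorem isPrime_span_mvPolynomialToLaurent {σ R : Type*} [CommRing R] {f : MvPolynomial σ R}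
    (hf : Prime f) (hfd : ∀ d, ¬f ∣ monomial d 1) :
    (Ideal.span {mvPolynomialToLaurent σ R f}).IsPrime := by
  let := (mvPolynomialToLaurent σ R).toAlgebra
  have := isLocalization_mvPolynomialToLaurent (σ := σ) (R := R)
  have hprime : (Ideal.span {f}).IsPrime := (Ideal.span_singleton_prime hf.ne_zero).2 hf
  have hdisj : Disjoint (MonoidHom.mrange (monomialOneHom R σ) : Set (MvPolynomial σ R))
      (Ideal.span {f}) := by
    rw [Set.disjoint_left]
    rintro _ ⟨d, rfl⟩ h
    exact hfd d.toAdd (Ideal.mem_span_singleton.1 h)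
  have := IsLocalization.isPrime_of_isPrime_disjoint _ (AddMonoidAlgebra R (σ →₀ ℤ)) _ hprime hdisj
  rwa [Ideal.map_span, Set.image_singleton] at this

theorem stmt3_general {σ R : Type*} [Fintype σ] [CommRing R] [IsDomain R]
    [UniqueFactorizationMonoid R] (hσ : 3 ≤ Fintype.card σ) {k : ℕ} (hk : (k : R) ≠ 0) :
    (Ideal.span {∑ i, AddMonoidAlgebra.single (Finsupp.single i (1 : ℤ)) (1 : R) ^ k} :
      Ideal (AddMonoidAlgebra R (σ →₀ ℤ))).IsPrime := by
  have : Nontrivial σ := Fintype.one_lt_card_iff_nontrivial.1 (by omega)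
  have hk' : k ≠ 0 := by rintro rfl; exact hk Nat.cast_zero
  simp only [← mvPolynomialToLaurent_X, ← map_pow, ← map_sum]
  exact isPrime_span_mvPolynomialToLaurent (prime_sum_X_pow hσ hk) (not_sum_X_pow_dvd_monomial hk')

/-- For every integer `k ≥ 1`, the ideal generated by `t₀^k + t₁^k + t₂^k` in the
Laurent polynomial ring `ℂ[t₀^{±1}, t₁^{±1}, t₂^{±1}]`, realized as the group algebra
`AddMonoidAlgebra ℂ (Fin 3 →₀ ℤ)`, is prime; here `t j` is the basis monomial
corresponding to the `j`-th standard basis vector of `ℤ³`. -/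
theorem stmt3 (k : ℕ) (hk : 1 ≤ k) :
    (Ideal.span
      { AddMonoidAlgebra.single (Finsupp.single (0 : Fin 3) (1 : ℤ)) (1 : ℂ) ^ k +
        AddMonoidAlgebra.single (Finsupp.single (1 : Fin 3) (1 : ℤ)) (1 : ℂ) ^ k +
        AddMonoidAlgebra.single (Finsupp.single (2 : Fin 3) (1 : ℤ)) (1 : ℂ) ^ k } :
      Ideal (AddMonoidAlgebra ℂ (Fin 3 →₀ ℤ))).IsPrime := by
  rw [← Fin.sum_univ_three fun i =>
    AddMonoidAlgebra.single (Finsupp.single i (1 : ℤ)) (1 : ℂ) ^ k]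
  exact stmt3_general (Fintype.card_fin 3).ge (Nat.cast_ne_zero.2 (by omega))
end

section
/- Let R be an E-ring and a ∈ R. Let P be an E-ideal of R which is maximal with respect to inclusion among the E-ideals J of R satisfying √[E] J = J and a ∉ J. Then P is a prime ideal of R. -/
/-- An E-ideal of an E-ring `(R, E)`: an ideal `I` such that `a ∈ I` implies `E a - 1 ∈ I`. -/
def IsEIdeal {R : Type*} [CommRing R] (E : R → R) (I : Ideal R) : Prop :=
  ∀ a ∈ I, E a - 1 ∈ I

/-- `Erad E X` is the intersection of all prime E-ideals containing `X`
(all of `R` if there are none). -/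
def Erad {R : Type*} [CommRing R] (E : R → R) (X : Set R) : Set R :=
  ⋂ I ∈ {I : Ideal R | I.IsPrime ∧ IsEIdeal E I ∧ X ⊆ ↑I}, (I : Set R)

/-- `eSpan E X` is the smallest E-ideal containing `X` (as a set: the intersection of
all E-ideals containing `X`). -/
def eSpan {R : Type*} [CommRing R] (E : R → R) (X : Set R) : Set R :=
  ⋂ I ∈ {I : Ideal R | IsEIdeal E I ∧ X ⊆ ↑I}, (I : Set R)

/-- The operators `√[n]` on subsets of `R`, defined inductively:
`√[0] X` is the smallest E-ideal containing `X`, and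
`√[n+1] X = √[n] {a | ∃ b₁ b₂, b₁ * b₂ ∈ √[n] X ∧ a ∈ √[n] (X ∪ {b₁}) ∩ √[n] (X ∪ {b₂})}`. -/
def nRad {R : Type*} [CommRing R] (E : R → R) : ℕ → Set R → Set R
  | 0, X => eSpan E X
  | n + 1, X => nRad E n {a | ∃ b₁ b₂ : R, b₁ * b₂ ∈ nRad E n X ∧
      a ∈ nRad E n (X ∪ {b₁}) ∩ nRad E n (X ∪ {b₂})}

/-- `√[E] X = ⋃ n, √[n] X`. -/
def eRad {R : Type*} [CommRing R] (E : R → R) (X : Set R) : Set R :=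
  ⋃ n : ℕ, nRad E n X

/-!
Call an ideal `J` E-radical if `√[E] J = J`. Each `√[n]` is Scott continuous, since the union of a
directed family of E-ideals is an E-ideal and one step of the recursion only asks for three
memberships. Together with `√[n] (√[n] X) ⊆ √[n+1] X` this makes `√[E]` idempotent, so `√[E] X` is
an E-radical ideal containing `X`. If `P` is maximal among the E-radical ideals missing `a` and
`x, y ∉ P`, then `a` lies in `√[E] (P ∪ {x})` and in `√[E] (P ∪ {y})`; were `x * y ∈ P`, the
definition of `√[n+1]` would put `a` in `√[E] P = P`.
-/

section ScottContinuity

variable {α β : Type*}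

theorem scottContinuous_sup_right [SemilatticeSup α] (a : α) : ScottContinuous (· ⊔ a) :=
  (ScottContinuous.fun_id.prodMk (.fun_const a)).fun_comp .sup₂

theorem scottContinuous_set_iff {f : Set α → Set β} :
    ScottContinuous f ↔ Monotone f ∧ ∀ d : Set (Set α), d.Nonempty → DirectedOn (· ≤ ·) d →
      ∀ x ∈ f (⋃₀ d), ∃ X ∈ d, x ∈ f X := by
  constructor
  · refine fun hf ↦ ⟨hf.monotone, fun d hne hdir x hx ↦ ?_⟩
    rw [← Set.sSup_eq_sUnion, hf.map_sSup hne hdir] at hx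
    simpa only [Set.sSup_eq_sUnion, Set.sUnion_image, Set.mem_iUnion, exists_prop] using hx
  · rintro ⟨hmono, hf⟩
    refine .of_map_sSup fun d hne hdir ↦ Set.Subset.antisymm (fun x hx ↦ ?_) ?_
    · obtain ⟨X, hX, hxX⟩ := hf d hne hdir x hx
      exact ⟨f X, Set.mem_image_of_mem f hX, hxX⟩
    · exact Set.sUnion_subset <| Set.forall_mem_image.2 fun X hX ↦
        hmono (Set.subset_sUnion_of_mem hX)

theorem exists_mem_of_mem_iUnion_of_scottContinuous {ι : Type*} [Nonempty ι]
    {f : Set α → Set β} (hf : ScottContinuous f) {F : ι → Set α} (hF : Directed (· ≤ ·) F)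
    {x : β} (hx : x ∈ f (⋃ i, F i)) : ∃ i, x ∈ f (F i) := by
  rw [← Set.sUnion_range] at hx
  obtain ⟨_, ⟨i, rfl⟩, hi⟩ := (scottContinuous_set_iff.1 hf).2 _ (Set.range_nonempty F)
    hF.directedOn_range x hx
  exact ⟨i, hi⟩

end ScottContinuity

section RadStep

variable {R : Type*}

/-- One step in the construction of the E-radical, for an arbitrary operator `ρ` on subsets:
`√[n+1] X` is `√[n]` of `radStep √[n] X`. -/
def radStep [Mul R] (ρ : Set R → Set R) (X : Set R) : Set R :=
  {a | ∃ b₁ b₂ : R, b₁ * b₂ ∈ ρ X ∧ a ∈ ρ (X ∪ {b₁}) ∩ ρ (X ∪ {b₂})}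

theorem radStep_mono [Mul R] {ρ : Set R → Set R} (hρ : Monotone ρ) : Monotone (radStep ρ) := by
  rintro X Y hXY a ⟨b₁, b₂, hb, ha₁, ha₂⟩
  exact ⟨b₁, b₂, hρ hXY hb, hρ (Set.union_subset_union_left _ hXY) ha₁,
    hρ (Set.union_subset_union_left _ hXY) ha₂⟩

theorem subset_radStep [MulZeroClass R] {ρ : Set R → Set R} (hρ : Monotone ρ) {X : Set R}
    (h0 : 0 ∈ ρ X) : ρ X ⊆ radStep ρ X := fun _ ha ↦
  have ha₀ := hρ (Set.subset_union_left (t := {0})) ha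
  ⟨0, 0, by rwa [mul_zero], ha₀, ha₀⟩

theorem scottContinuous_radStep [Mul R] {ρ : Set R → Set R} (hρ : ScottContinuous ρ) :
    ScottContinuous (radStep ρ) := by
  refine scottContinuous_set_iff.2 ⟨radStep_mono hρ.monotone, fun d hne hdir a ha ↦ ?_⟩
  obtain ⟨b₁, b₂, hb, ha₁, ha₂⟩ := ha
  have hadjoin (b : R) : ScottContinuous fun X ↦ ρ (X ∪ {b}) :=
    (scottContinuous_sup_right {b}).fun_comp hρ
  obtain ⟨X, hX, hbX⟩ := (scottContinuous_set_iff.1 hρ).2 d hne hdir _ hb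
  obtain ⟨Y₁, hY₁, haY₁⟩ := (scottContinuous_set_iff.1 (hadjoin b₁)).2 d hne hdir a ha₁
  obtain ⟨Y₂, hY₂, haY₂⟩ := (scottContinuous_set_iff.1 (hadjoin b₂)).2 d hne hdir a ha₂
  obtain ⟨Y, hY, hY₁Y, hY₂Y⟩ := hdir Y₁ hY₁ Y₂ hY₂
  obtain ⟨Z, hZ, hXZ, hYZ⟩ := hdir X hX Y hY
  exact ⟨Z, hZ, b₁, b₂, hρ.monotone hXZ hbX, (hadjoin b₁).monotone (hY₁Y.trans hYZ) haY₁,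
    (hadjoin b₂).monotone (hY₂Y.trans hYZ) haY₂⟩

end RadStep

section ERing

variable {R : Type*} [CommRing R] {E : R → R}

protected theorem IsEIdeal.sInf {S : Set (Ideal R)} (hS : ∀ I ∈ S, IsEIdeal E I) :
    IsEIdeal E (sInf S) := by
  intro a ha
  rw [Ideal.mem_sInf] at ha ⊢
  exact fun I hI ↦ hS I hI a (ha hI)

protected theorem IsEIdeal.sSup_of_directedOn {S : Set (Ideal R)} (hne : S.Nonempty)
    (hdir : DirectedOn (· ≤ ·) S) (hS : ∀ I ∈ S, IsEIdeal E I) : IsEIdeal E (sSup S) := by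
  intro a ha
  rw [Submodule.mem_sSup_of_directed hne hdir] at ha ⊢
  obtain ⟨I, hI, haI⟩ := ha
  exact ⟨I, hI, hS I hI a haI⟩

variable (E) in
/-- The E-ideal generated by `X`, as an element of `Ideal R`; its underlying set is `eSpan E X`. -/
def eIdealSpan (X : Set R) : Ideal R :=
  sInf {I : Ideal R | IsEIdeal E I ∧ X ⊆ I}

theorem isEIdeal_eIdealSpan (X : Set R) : IsEIdeal E (eIdealSpan E X) :=
  .sInf fun _ hI ↦ hI.1

variable (E) in
theorem coe_eIdealSpan (X : Set R) : (eIdealSpan E X : Set R) = eSpan E X :=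
  Submodule.coe_sInf _

theorem eIdealSpan_le_iff {I : Ideal R} (hI : IsEIdeal E I) {X : Set R} :
    eIdealSpan E X ≤ I ↔ X ⊆ I :=
  ⟨fun h _ hx ↦ h (Ideal.mem_sInf.2 fun _ hJ ↦ hJ.2 hx), fun h ↦ sInf_le ⟨hI, h⟩⟩

theorem subset_eIdealSpan (X : Set R) : X ⊆ eIdealSpan E X :=
  (eIdealSpan_le_iff (isEIdeal_eIdealSpan X)).1 le_rfl

theorem eIdealSpan_mono : Monotone (eIdealSpan E) := fun _ Y hXY ↦
  (eIdealSpan_le_iff (isEIdeal_eIdealSpan Y)).2 (hXY.trans (subset_eIdealSpan Y))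

variable (E)

theorem scottContinuous_eSpan : ScottContinuous (eSpan E) := by
  have hmono : Monotone (eSpan E) := fun X Y hXY ↦ by
    simpa only [← coe_eIdealSpan] using SetLike.coe_subset_coe.2 (eIdealSpan_mono hXY)
  refine scottContinuous_set_iff.2 ⟨hmono, fun d hne hdir x hx ↦ ?_⟩
  have hne' : (eIdealSpan E '' d).Nonempty := hne.image _
  have hdir' : DirectedOn (· ≤ ·) (eIdealSpan E '' d) :=
    hdir.mono_comp fun _ _ h ↦ eIdealSpan_mono h
  have hJ : IsEIdeal E (sSup (eIdealSpan E '' d)) :=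
    .sSup_of_directedOn hne' hdir' (Set.forall_mem_image.2 fun X _ ↦ isEIdeal_eIdealSpan X)
  have hdJ : ⋃₀ d ⊆ (sSup (eIdealSpan E '' d) : Ideal R) := Set.sUnion_subset fun X hX ↦
    (eIdealSpan_le_iff hJ).1 (le_sSup (Set.mem_image_of_mem _ hX))
  rw [← coe_eIdealSpan] at hx
  obtain ⟨_, ⟨X, hX, rfl⟩, hxX⟩ :=
    (Submodule.mem_sSup_of_directed hne' hdir').1 ((eIdealSpan_le_iff hJ).2 hdJ hx)
  exact ⟨X, hX, coe_eIdealSpan E X ▸ hxX⟩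

theorem nRad_zero (X : Set R) : nRad E 0 X = eIdealSpan E X := (coe_eIdealSpan E X).symm

theorem nRad_succ (n : ℕ) : nRad E (n + 1) = nRad E n ∘ radStep (nRad E n) := rfl

theorem scottContinuous_nRad (n : ℕ) : ScottContinuous (nRad E n) := by
  induction n with
  | zero => exact scottContinuous_eSpan E
  | succ n ih => exact nRad_succ E n ▸ (scottContinuous_radStep ih).comp ih

theorem nRad_mono_right (n : ℕ) : Monotone (nRad E n) := (scottContinuous_nRad E n).monotone

theorem zero_mem_nRad (n : ℕ) (X : Set R) : 0 ∈ nRad E n X := by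
  induction n generalizing X with
  | zero => exact nRad_zero E X ▸ (eIdealSpan E X).zero_mem
  | succ n ih => exact ih _

theorem nRad_nRad_subset (n : ℕ) (X : Set R) : nRad E n (nRad E n X) ⊆ nRad E (n + 1) X :=
  nRad_mono_right E n (subset_radStep (nRad_mono_right E n) (zero_mem_nRad E n X))

theorem subset_nRad (n : ℕ) (X : Set R) : X ⊆ nRad E n X := by
  induction n generalizing X with
  | zero => exact nRad_zero E X ▸ subset_eIdealSpan X
  | succ n ih => exact (ih X).trans ((ih _).trans (nRad_nRad_subset E n X))

theorem nRad_mono_left (X : Set R) : Monotone fun n ↦ nRad E n X :=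
  monotone_nat_of_le_succ fun n ↦ (subset_nRad E n _).trans (nRad_nRad_subset E n X)

theorem nRad_subset_eRad (n : ℕ) (X : Set R) : nRad E n X ⊆ eRad E X :=
  Set.subset_iUnion (fun n ↦ nRad E n X) n

theorem subset_eRad (X : Set R) : X ⊆ eRad E X :=
  (subset_nRad E 0 X).trans (nRad_subset_eRad E 0 X)

theorem eRad_eRad (X : Set R) : eRad E (eRad E X) = eRad E X := by
  refine Set.Subset.antisymm (fun x hx ↦ ?_) (subset_eRad E _)
  obtain ⟨m, hm⟩ := Set.mem_iUnion.1 hx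
  obtain ⟨k, hk⟩ : ∃ k, x ∈ nRad E m (nRad E k X) :=
    exists_mem_of_mem_iUnion_of_scottContinuous (scottContinuous_nRad E m)
      (nRad_mono_left E X).directed_le hm
  have hx' : x ∈ nRad E (max m k) (nRad E (max m k) X) :=
    nRad_mono_right E _ (nRad_mono_left E X (le_max_right m k))
      (nRad_mono_left E _ (le_max_left m k) hk)
  exact nRad_subset_eRad E _ X (nRad_nRad_subset E _ X hx')

theorem coe_eIdealSpan_eRad (X : Set R) : (eIdealSpan E (eRad E X) : Set R) = eRad E X := by
  refine Set.Subset.antisymm ?_ (subset_eIdealSpan _)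
  calc (eIdealSpan E (eRad E X) : Set R)
    _ = nRad E 0 (eRad E X) := (nRad_zero E _).symm
    _ ⊆ eRad E (eRad E X) := nRad_subset_eRad E 0 _
    _ = eRad E X := eRad_eRad E X

variable {E}

theorem mem_eRad_of_mul_mem {X : Set R} {a b₁ b₂ : R} (hb : b₁ * b₂ ∈ eRad E X)
    (ha₁ : a ∈ eRad E (X ∪ {b₁})) (ha₂ : a ∈ eRad E (X ∪ {b₂})) : a ∈ eRad E X := by
  obtain ⟨k, hk⟩ := Set.mem_iUnion.1 hb
  obtain ⟨m₁, hm₁⟩ := Set.mem_iUnion.1 ha₁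
  obtain ⟨m₂, hm₂⟩ := Set.mem_iUnion.1 ha₂
  let n := max k (max m₁ m₂)
  have ha : a ∈ radStep (nRad E n) X :=
    ⟨b₁, b₂, nRad_mono_left E X (by lia) hk, nRad_mono_left E _ (by lia) hm₁,
      nRad_mono_left E _ (by lia) hm₂⟩
  exact nRad_subset_eRad E (n + 1) X (subset_nRad E n _ ha)

variable (E) in
/-- An ideal `J` is E-radical if `√[E] J = J`. Being an E-ideal is not part of the definition; see
`IsERadical.isEIdeal`. -/
def IsERadical (J : Ideal R) : Prop :=
  eRad E (J : Set R) = J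

theorem IsERadical.isEIdeal {J : Ideal R} (hJ : IsERadical E J) : IsEIdeal E J := by
  have hcoe := coe_eIdealSpan_eRad E (J : Set R)
  rw [show eRad E (J : Set R) = J from hJ] at hcoe
  exact SetLike.coe_injective hcoe ▸ isEIdeal_eIdealSpan _

theorem isERadical_eIdealSpan_eRad (X : Set R) : IsERadical E (eIdealSpan E (eRad E X)) := by
  rw [IsERadical, coe_eIdealSpan_eRad, eRad_eRad]

theorem mem_eRad_union_singleton_of_maximal {P : Ideal R} {a b : R}
    (hP : Maximal (fun J : Ideal R ↦ IsERadical E J ∧ a ∉ J) P) (hb : b ∉ P) :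
    a ∈ eRad E (P ∪ {b}) := by
  by_contra ha
  let J := eIdealSpan E (eRad E (P ∪ {b}))
  have hPbJ : (P : Set R) ∪ {b} ⊆ J := (subset_eRad E _).trans (subset_eIdealSpan _)
  have haJ : a ∉ J := by rwa [← SetLike.mem_coe, coe_eIdealSpan_eRad]
  have hJP : J ≤ P := hP.le_of_ge ⟨isERadical_eIdealSpan_eRad _, haJ⟩ fun x hx ↦ hPbJ (.inl hx)
  exact hb (hJP (hPbJ (.inr rfl)))

end ERing

theorem stmt7_general {R : Type*} [CommRing R] {E : R → R} {a : R} {P : Ideal R}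
    (hP : Maximal (fun J : Ideal R ↦ IsERadical E J ∧ a ∉ J) P) : P.IsPrime := by
  obtain ⟨hPrad, haP⟩ := hP.prop
  refine ⟨fun hPtop ↦ haP (hPtop ▸ Submodule.mem_top), fun {x y} hxy ↦ ?_⟩
  by_contra! hxyP
  have ha : a ∈ eRad E (P : Set R) := mem_eRad_of_mul_mem (subset_eRad E _ hxy)
    (mem_eRad_union_singleton_of_maximal hP hxyP.1) (mem_eRad_union_singleton_of_maximal hP hxyP.2)
  exact haP (hPrad.le ha)

/-- Let `a ∈ R` and let `P` be an E-ideal maximal (w.r.t. inclusion) among the E-ideals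
`J` of `R` with `√[E] J = J` and `a ∉ J`. Then `P` is prime. -/
theorem stmt7 {R : Type*} [CommRing R] (E : R → R)
    (hE0 : E 0 = 1) (hEadd : ∀ x y : R, E (x + y) = E x * E y)
    (a : R) (P : Ideal R) (hP : IsEIdeal E P)
    (hPfix : eRad E (P : Set R) = (P : Set R)) (haP : a ∉ P)
    (hmax : ∀ J : Ideal R, IsEIdeal E J → eRad E (J : Set R) = (J : Set R) → a ∉ J →
      P ≤ J → J = P) :
    P.IsPrime :=
  stmt7_general ⟨⟨hPfix, haP⟩, fun J hJ hPJ ↦ (hmax J hJ.1.isEIdeal hJ.1 hJ.2 hPJ).le⟩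
end
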